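/- Case (2,2,0) of Inverse_L completeness: For typed ASP λ-calculus formulas H and G in β-normal form where H has order 2 and G has order 0, if there exists a typed ASP λ-calculus formula F of order 2 in β-normal form with H = F @ G, then Inverse_L(H,G) returns a non-null formula F' with H = F' @ G. -/

import Mathlib

/- Typed Answer Set Programming lambda calculus (Baral, Dzifcak, Gonzalez, Gottesman).

   Base types: e (terms), a (atoms), l (literals), g (gen-literals),
   d (bodies), h (heads), t (satisfiability values).  Terms are de Bruijn
   lambda terms over ASP connectives; function and predicate symbols are
   constants of iterated arrow type applied via `app`. -/

namespace ASPLambda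

inductive BTy : Type
  | e | a | l | g | d | h | t
deriving DecidableEq, Repr

inductive Ty : Type
  | base : BTy → Ty
  | arrow : Ty → Ty → Ty
deriving DecidableEq, Repr

/-- The order of a type: base types have order 0,
    `order (A → B) = max (order A + 1) (order B)`. -/
def Ty.order : Ty → ℕ
  | .base _ => 0
  | .arrow A B => max (A.order + 1) B.order

/-- Iterated arrow type `A → ⋯ → A → B` with `n` arguments. -/
def Ty.arrN : ℕ → Ty → Ty → Ty
  | 0, _, B => B
  | n + 1, A, B => .arrow A (Ty.arrN n A B)

/-- ASP typed terms (de Bruijn representation).  `neg` is classical negation ¬,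
    `naf` is negation as failure (not), `disj` is `or`, `conj` is `,`,
    `rule h b` is `h ← b.`, `ruleH h` is `h ←.`, `ruleB b` is `← b.`,
    and `seq` juxtaposes rules/programs. -/
inductive Tm : Type
  | var : ℕ → Tm
  | const : String → Ty → Tm
  | app : Tm → Tm → Tm
  | lam : Ty → Tm → Tm
  | neg : Tm → Tm
  | naf : Tm → Tm
  | disj : Tm → Tm → Tm
  | conj : Tm → Tm → Tm
  | rule : Tm → Tm → Tm
  | ruleH : Tm → Tm
  | ruleB : Tm → Tm
  | seq : Tm → Tm → Tm
deriving DecidableEq, Repr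

namespace Tm

/-- de Bruijn shift by `dpl` of indices ≥ `c`. -/
def shift (dpl c : ℕ) : Tm → Tm
  | .var n => if n < c then .var n else .var (n + dpl)
  | .const s A => .const s A
  | .app f x => .app (f.shift dpl c) (x.shift dpl c)
  | .lam A b => .lam A (b.shift dpl (c + 1))
  | .neg x => .neg (x.shift dpl c)
  | .naf x => .naf (x.shift dpl c)
  | .disj x y => .disj (x.shift dpl c) (y.shift dpl c)
  | .conj x y => .conj (x.shift dpl c) (y.shift dpl c)
  | .rule x y => .rule (x.shift dpl c) (y.shift dpl c)
  | .ruleH x => .ruleH (x.shift dpl c)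
  | .ruleB x => .ruleB (x.shift dpl c)
  | .seq x y => .seq (x.shift dpl c) (y.shift dpl c)

/-- Substitution of `s` for de Bruijn index `j` (decrementing higher indices). -/
def subst : ℕ → Tm → Tm → Tm
  | j, s, .var n => if n = j then s else if j < n then .var (n - 1) else .var n
  | _, _, .const c A => .const c A
  | j, s, .app f x => .app (subst j s f) (subst j s x)
  | j, s, .lam A b => .lam A (subst (j + 1) (s.shift 1 0) b)
  | j, s, .neg x => .neg (subst j s x)
  | j, s, .naf x => .naf (subst j s x)
  | j, s, .disj x y => .disj (subst j s x) (subst j s y)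
  | j, s, .conj x y => .conj (subst j s x) (subst j s y)
  | j, s, .rule x y => .rule (subst j s x) (subst j s y)
  | j, s, .ruleH x => .ruleH (subst j s x)
  | j, s, .ruleB x => .ruleB (subst j s x)
  | j, s, .seq x y => .seq (subst j s x) (subst j s y)

/-- Whether the de Bruijn index `k` occurs free. -/
def hasFree (k : ℕ) : Tm → Bool
  | .var n => n == k
  | .const _ _ => false
  | .app f x => f.hasFree k || x.hasFree k
  | .lam _ b => b.hasFree (k + 1)
  | .neg x => x.hasFree k
  | .naf x => x.hasFree k
  | .disj x y => x.hasFree k || y.hasFree k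
  | .conj x y => x.hasFree k || y.hasFree k
  | .rule x y => x.hasFree k || y.hasFree k
  | .ruleH x => x.hasFree k
  | .ruleB x => x.hasFree k
  | .seq x y => x.hasFree k || y.hasFree k

/-- Every abstractor binds (at least one occurrence of) its variable (λI condition). -/
def lamI : Tm → Bool
  | .var _ => true
  | .const _ _ => true
  | .app f x => f.lamI && x.lamI
  | .lam _ b => b.lamI && b.hasFree 0
  | .neg x => x.lamI
  | .naf x => x.lamI
  | .disj x y => x.lamI && y.lamI
  | .conj x y => x.lamI && y.lamI
  | .rule x y => x.lamI && y.lamI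
  | .ruleH x => x.lamI
  | .ruleB x => x.lamI
  | .seq x y => x.lamI && y.lamI

/-- A λ-term in the sense of the signature: a variable or a constant. -/
def isVarOrConst : Tm → Bool
  | .var _ => true
  | .const _ _ => true
  | _ => false

/-- Contains no lambda abstractor. -/
def noLam : Tm → Bool
  | .var _ => true
  | .const _ _ => true
  | .app f x => f.noLam && x.noLam
  | .lam _ _ => false
  | .neg x => x.noLam
  | .naf x => x.noLam
  | .disj x y => x.noLam && y.noLam
  | .conj x y => x.noLam && y.noLam
  | .rule x y => x.noLam && y.noLam
  | .ruleH x => x.noLam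
  | .ruleB x => x.noLam
  | .seq x y => x.noLam && y.noLam

/-- The head of an application spine is a variable. -/
def headIsVar : Tm → Bool
  | .var _ => true
  | .app f _ => f.headIsVar
  | _ => false

/-- Contains no application whose head is a (bound) variable. -/
def noVarApp : Tm → Bool
  | .var _ => true
  | .const _ _ => true
  | .app f x => !(f.headIsVar) && f.noVarApp && x.noVarApp
  | .lam _ b => b.noVarApp
  | .neg x => x.noVarApp
  | .naf x => x.noVarApp
  | .disj x y => x.noVarApp && y.noVarApp
  | .conj x y => x.noVarApp && y.noVarApp
  | .rule x y => x.noVarApp && y.noVarApp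
  | .ruleH x => x.noVarApp
  | .ruleB x => x.noVarApp
  | .seq x y => x.noVarApp && y.noVarApp

/-- Number of symbols of a formula (its size). -/
def size : Tm → ℕ
  | .var _ => 1
  | .const _ _ => 1
  | .app f x => f.size + x.size + 1
  | .lam _ b => b.size + 1
  | .neg x => x.size + 1
  | .naf x => x.size + 1
  | .disj x y => x.size + y.size + 1
  | .conj x y => x.size + y.size + 1
  | .rule x y => x.size + y.size + 1
  | .ruleH x => x.size + 1
  | .ruleB x => x.size + 1
  | .seq x y => x.size + y.size + 1

/-- Number of lambda abstractors; in a formula (where every abstractor binds a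
    variable and every variable is bound) this is the number of variables. -/
def numAbs : Tm → ℕ
  | .var _ => 0
  | .const _ _ => 0
  | .app f x => f.numAbs + x.numAbs
  | .lam _ b => b.numAbs + 1
  | .neg x => x.numAbs
  | .naf x => x.numAbs
  | .disj x y => x.numAbs + y.numAbs
  | .conj x y => x.numAbs + y.numAbs
  | .rule x y => x.numAbs + y.numAbs
  | .ruleH x => x.numAbs
  | .ruleB x => x.numAbs
  | .seq x y => x.numAbs + y.numAbs

/-- Replacement `t(A : B)`: replace every occurrence of `A` in `t` by `B`
    (shifting under binders). -/
def replace : Tm → Tm → Tm → Tm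
  | .var n, A, B => if Tm.var n = A then B else .var n
  | .const s T, A, B => if Tm.const s T = A then B else .const s T
  | .app f x, A, B => if Tm.app f x = A then B else .app (f.replace A B) (x.replace A B)
  | .lam T b, A, B => if Tm.lam T b = A then B else .lam T (b.replace (A.shift 1 0) (B.shift 1 0))
  | .neg x, A, B => if Tm.neg x = A then B else .neg (x.replace A B)
  | .naf x, A, B => if Tm.naf x = A then B else .naf (x.replace A B)
  | .disj x y, A, B => if Tm.disj x y = A then B else .disj (x.replace A B) (y.replace A B)
  | .conj x y, A, B => if Tm.conj x y = A then B else .conj (x.replace A B) (y.replace A B)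
  | .rule x y, A, B => if Tm.rule x y = A then B else .rule (x.replace A B) (y.replace A B)
  | .ruleH x, A, B => if Tm.ruleH x = A then B else .ruleH (x.replace A B)
  | .ruleB x, A, B => if Tm.ruleB x = A then B else .ruleB (x.replace A B)
  | .seq x y, A, B => if Tm.seq x y = A then B else .seq (x.replace A B) (y.replace A B)

/-- Simultaneous sequential replacement `t(A₁,…,Aₙ : B₁,…,Bₙ)`. -/
def replaceList : Tm → List (Tm × Tm) → Tm
  | t, [] => t
  | t, (A, B) :: r => (t.replace A B).replaceList r

/-- Iterated abstraction `λv₁ … λvₙ. b`. -/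
def lams : List Ty → Tm → Tm
  | [], b => b
  | A :: r, b => .lam A (Tm.lams r b)

/-- Iterated application `f @ x₁ @ ⋯ @ xₙ`. -/
def apps : Tm → List Tm → Tm
  | f, [] => f
  | f, x :: r => Tm.apps (.app f x) r

end Tm

/-- Typing relation for ASP typed terms (Definition "ASP Typed Term").
    The coercion rules carry the side condition that the coerced term
    is not a λ-term (i.e. not a variable or constant). -/
inductive HasType : List Ty → Tm → Ty → Prop
  | var {Γ n A} : Γ[n]? = some A → HasType Γ (.var n) A
  | const {Γ s A} : HasType Γ (.const s A) A
  | app {Γ f x A B} : HasType Γ f (.arrow A B) → HasType Γ x A → HasType Γ (.app f x) B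
  | lam {Γ b A B} : HasType (A :: Γ) b B → HasType Γ (.lam A b) (.arrow A B)
  | atomLit {Γ x} : HasType Γ x (.base .a) → x.isVarOrConst = false → HasType Γ x (.base .l)
  | negLit {Γ x} : HasType Γ x (.base .a) → HasType Γ (.neg x) (.base .l)
  | litGen {Γ x} : HasType Γ x (.base .l) → x.isVarOrConst = false → HasType Γ x (.base .g)
  | nafGen {Γ x} : HasType Γ x (.base .l) → HasType Γ (.naf x) (.base .g)
  | litHead {Γ x} : HasType Γ x (.base .l) → x.isVarOrConst = false → HasType Γ x (.base .h)
  | disj {Γ x y} : HasType Γ x (.base .h) → HasType Γ y (.base .h) →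
      HasType Γ (.disj x y) (.base .h)
  | genBody {Γ x} : HasType Γ x (.base .g) → x.isVarOrConst = false → HasType Γ x (.base .d)
  | conj {Γ x y} : HasType Γ x (.base .d) → HasType Γ y (.base .d) →
      HasType Γ (.conj x y) (.base .d)
  | rule {Γ x y} : HasType Γ x (.base .h) → HasType Γ y (.base .d) →
      HasType Γ (.rule x y) (.base .t)
  | ruleH {Γ x} : HasType Γ x (.base .h) → HasType Γ (.ruleH x) (.base .t)
  | ruleB {Γ y} : HasType Γ y (.base .d) → HasType Γ (.ruleB y) (.base .t)
  | seq {Γ x y} : HasType Γ x (.base .t) → HasType Γ y (.base .t) →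
      HasType Γ (.seq x y) (.base .t)

/-- A typed ASP λ-calculus formula of type `A`: a closed well-typed ASP term
    in which every abstractor binds a variable. -/
structure IsFormula (t : Tm) (A : Ty) : Prop where
  typed : HasType [] t A
  lamI : t.lamI = true

/-- One step of β-reduction (with congruence through all constructors). -/
inductive Step : Tm → Tm → Prop
  | beta {A b x} : Step (.app (.lam A b) x) (Tm.subst 0 x b)
  | appL {f f' x} : Step f f' → Step (.app f x) (.app f' x)
  | appR {f x x'} : Step x x' → Step (.app f x) (.app f x')
  | lam {A b b'} : Step b b' → Step (.lam A b) (.lam A b')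
  | neg {x x'} : Step x x' → Step (.neg x) (.neg x')
  | naf {x x'} : Step x x' → Step (.naf x) (.naf x')
  | disjL {x x' y} : Step x x' → Step (.disj x y) (.disj x' y)
  | disjR {x y y'} : Step y y' → Step (.disj x y) (.disj x y')
  | conjL {x x' y} : Step x x' → Step (.conj x y) (.conj x' y)
  | conjR {x y y'} : Step y y' → Step (.conj x y) (.conj x y')
  | ruleL {x x' y} : Step x x' → Step (.rule x y) (.rule x' y)
  | ruleR {x y y'} : Step y y' → Step (.rule x y) (.rule x y')
  | ruleH {x x'} : Step x x' → Step (.ruleH x) (.ruleH x')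
  | ruleB {x x'} : Step x x' → Step (.ruleB x) (.ruleB x')
  | seqL {x x' y} : Step x x' → Step (.seq x y) (.seq x' y)
  | seqR {x y y'} : Step y y' → Step (.seq x y) (.seq x y')

/-- Multi-step β-reduction. -/
abbrev Steps : Tm → Tm → Prop := Relation.ReflTransGen Step

/-- β-normal form: no β-redex occurrences, i.e. no step is possible. -/
def Tm.IsNormal (t : Tm) : Prop := ∀ u, ¬ Step t u

/-- `N` is the β-normal form of `M`. -/
def NormalizesTo (M N : Tm) : Prop := Steps M N ∧ N.IsNormal

/-- `Occurs P Q`: the term `P` occurs in `Q` (`P` is a sub-term of `Q`). -/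
inductive Occurs : Tm → Tm → Prop
  | refl (t : Tm) : Occurs t t
  | appL {P M N} : Occurs P M → Occurs P (.app M N)
  | appR {P M N} : Occurs P N → Occurs P (.app M N)
  | lam {P A M} : Occurs P M → Occurs P (.lam A M)
  | neg {P M} : Occurs P M → Occurs P (.neg M)
  | naf {P M} : Occurs P M → Occurs P (.naf M)
  | disjL {P M N} : Occurs P M → Occurs P (.disj M N)
  | disjR {P M N} : Occurs P N → Occurs P (.disj M N)
  | conjL {P M N} : Occurs P M → Occurs P (.conj M N)
  | conjR {P M N} : Occurs P N → Occurs P (.conj M N)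
  | ruleL {P M N} : Occurs P M → Occurs P (.rule M N)
  | ruleR {P M N} : Occurs P N → Occurs P (.rule M N)
  | ruleH {P M} : Occurs P M → Occurs P (.ruleH M)
  | ruleB {P M} : Occurs P M → Occurs P (.ruleB M)
  | seqL {P M N} : Occurs P M → Occurs P (.seq M N)
  | seqR {P M N} : Occurs P N → Occurs P (.seq M N)

/-- The `Inverse_L` algorithm, as a relation: `InvL H G F` holds exactly when
    one of the four cases of `Inverse_L(H,G)` applies and produces the
    (non-null) output `F`.  Variables `v₁,…,v_s` are represented by de Bruijn
    indices: under binders `λv₁…λv_s`, the variable `v_k` is index `s - k`. -/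
inductive InvL : Tm → Tm → Tm → Prop
  | case1 (H : Tm) (A : Ty) :
      InvL H (.lam A (.var 0)) (.lam (.arrow A A) (.app (.var 0) (H.shift 1 0)))
  | case2 (H G : Tm) (A : Ty) :
      Occurs G H → HasType [] G A →
      InvL H G (.lam A ((H.shift 1 0).replace (G.shift 1 0) (.var 0)))
  | case3 (H G : Tm) (W : Ty) (Js : List (Tm × List Tm)) (tys : List Ty)
      (ks : List ℕ) (s m : ℕ) :
      (∀ A : Ty, G ≠ .lam A (.var 0)) →
      Js ≠ [] →
      tys.length = s → 1 ≤ s → s ≤ m → ks.length = m →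
      (∀ k ∈ ks, 1 ≤ k ∧ k ≤ s) →
      (∀ Ja ∈ Js, Ja.2.length = m ∧ Occurs Ja.1 H ∧ (∀ x ∈ Ja.2, Occurs x Ja.1) ∧
        G = Tm.lams tys ((Ja.1.shift s 0).replaceList
              ((Ja.2.map (fun x => x.shift s 0)).zip
                (ks.map (fun k => Tm.var (s - k)))))) →
      InvL H G (.lam W ((H.shift 1 0).replaceList
        (Js.map (fun Ja => (Ja.1.shift 1 0,
          Tm.apps (.var 0) (ks.map (fun k => (Ja.2.getD (k - 1) Ja.1).shift 1 0)))))))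
  | case4 (H G : Tm) (W W' : Ty) (tysI tysS : List Ty) (J J1 : Tm)
      (args : List Tm) (ks : List ℕ) (i s : ℕ) :
      tysI.length = i → tysS.length = s - i → i < s →
      args.length = s - i → ks.length = s - i →
      (∀ k ∈ ks, i + 1 ≤ k ∧ k ≤ s) →
      H = Tm.lams tysI J →
      Occurs J1 J → (∀ x ∈ args, Occurs x J1) →
      G = .lam W ((J.shift 1 0).replace (J1.shift 1 0)
            (Tm.apps (.var 0) (ks.map (fun k => (args.getD (k - i - 1) J1).shift 1 0)))) →
      InvL H G (.lam W' (Tm.lams tysI (.app (.var i)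
        (Tm.lams tysS ((J1.shift (s + 1) 0).replaceList
          ((args.map (fun x => x.shift (s + 1) 0)).zip
            (ks.map (fun k => Tm.var (s - k)))))))))

/-- The `Inverse_R` algorithm, as a relation: `InvR H G F` holds exactly when
    one of the four cases of `Inverse_R(H,G)` applies and produces the
    (non-null) output `F`. -/
inductive InvR : Tm → Tm → Tm → Prop
  | case1 (H G J F : Tm) (A : Ty) :
      G = .lam A (.app (.var 0) (J.shift 1 0)) →
      InvL H J F → InvR H G F
  | case2 (H G J : Tm) (A : Ty) :
      Occurs J H → HasType [] J A →
      G = .lam A ((H.shift 1 0).replace (J.shift 1 0) (.var 0)) →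
      InvR H G J
  | case3 (H G : Tm) (W : Ty) (Js : List (Tm × List Tm)) (tys : List Ty)
      (ks : List ℕ) (s m : ℕ) (J1 : Tm) (args1 : List Tm) :
      (∀ (A : Ty) (J : Tm), G ≠ .lam A (.app (.var 0) (J.shift 1 0))) →
      Js ≠ [] → Js.head? = some (J1, args1) →
      tys.length = s → 1 ≤ s → s ≤ m → ks.length = m →
      (∀ k ∈ ks, 1 ≤ k ∧ k ≤ m) →
      (∀ Ja ∈ Js, Ja.2.length = m ∧ Occurs Ja.1 H ∧ (∀ x ∈ Ja.2, Occurs x Ja.1)) →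
      G = .lam W ((H.shift 1 0).replaceList
        (Js.map (fun Ja => (Ja.1.shift 1 0,
          Tm.apps (.var 0) (ks.map (fun k => (Ja.2.getD (k - 1) Ja.1).shift 1 0)))))) →
      InvR H G (Tm.lams tys ((J1.shift s 0).replaceList
        ((args1.map (fun x => x.shift s 0)).zip (ks.map (fun k => Tm.var (s - k))))))
  | case4 (H G : Tm) (W W' : Ty) (tysI tysS : List Ty) (J J1 : Tm)
      (args : List Tm) (ks : List ℕ) (i s : ℕ) :
      tysI.length = i → tysS.length = s - i → i < s →
      args.length = s - i → ks.length = s - i →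
      (∀ k ∈ ks, i + 1 ≤ k ∧ k ≤ s) →
      H = Tm.lams tysI J →
      Occurs J1 J → (∀ x ∈ args, Occurs x J1) →
      G = .lam W (Tm.lams tysI (.app (.var i)
        (Tm.lams tysS ((J1.shift (s + 1) 0).replaceList
          ((args.map (fun x => x.shift (s + 1) 0)).zip
            (ks.map (fun k => Tm.var (s - k)))))))) →
      InvR H G (.lam W' ((J.shift 1 0).replace (J1.shift 1 0)
        (Tm.apps (.var 0) (ks.map (fun k => (args.getD (k - i - 1) J1).shift 1 0)))))

/-! ### The Answer Set Programming language proper -/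

/-- ASP terms: constants, or function symbols applied to terms. -/
inductive ASPTerm : Tm → Prop
  | const (s : String) : ASPTerm (.const s (.base .e))
  | fn (f : String) (args : List Tm) :
      args ≠ [] → (∀ x ∈ args, ASPTerm x) →
      ASPTerm (Tm.apps (.const f (Ty.arrN args.length (.base .e) (.base .e))) args)

/-- ASP atoms: predicate symbols applied to terms. -/
inductive ASPAtom : Tm → Prop
  | pred (p : String) (args : List Tm) :
      (∀ x ∈ args, ASPTerm x) →
      ASPAtom (Tm.apps (.const p (Ty.arrN args.length (.base .e) (.base .a))) args)

/-- ASP literals: atoms or negated atoms. -/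
inductive ASPLit : Tm → Prop
  | atom {x} : ASPAtom x → ASPLit x
  | neg {x} : ASPAtom x → ASPLit (.neg x)

/-- ASP gen-literals: literals or naf-literals. -/
inductive ASPGen : Tm → Prop
  | lit {x} : ASPLit x → ASPGen x
  | naf {x} : ASPLit x → ASPGen (.naf x)

/-- Heads of ASP rules: `or`-connected literals. -/
inductive ASPHead : Tm → Prop
  | lit {x} : ASPLit x → ASPHead x
  | disj {x y} : ASPHead x → ASPHead y → ASPHead (.disj x y)

/-- Bodies of ASP rules: `,`-connected gen-literals. -/
inductive ASPBody : Tm → Prop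
  | gen {x} : ASPGen x → ASPBody x
  | conj {x y} : ASPBody x → ASPBody y → ASPBody (.conj x y)

/-- ASP rules `L₀ or … or L_k ← L_{k+1},…, not L_n.` (including facts and
    constraints). -/
inductive ASPRule : Tm → Prop
  | mk {h b} : ASPHead h → ASPBody b → ASPRule (.rule h b)
  | fact {h} : ASPHead h → ASPRule (.ruleH h)
  | constr {b} : ASPBody b → ASPRule (.ruleB b)

/-- ASP programs: `.`-separated sequences of ASP rules. -/
inductive ASPProg : Tm → Prop
  | single {r} : ASPRule r → ASPProg r
  | seq {x y} : ASPProg x → ASPProg y → ASPProg (.seq x y)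

/-- Expressions of the ASP language, by base type. -/
def ASPExpr (M : Tm) : BTy → Prop
  | .e => ASPTerm M
  | .a => ASPAtom M
  | .l => ASPLit M
  | .g => ASPGen M
  | .h => ASPHead M
  | .d => ASPBody M
  | .t => ASPProg M


theorem shift_of_typed {Γ : List Ty} {t : Tm} {A : Ty} (h : HasType Γ t A) :
    ∀ n c, Γ.length ≤ c → t.shift n c = t := by
  induction h with
  | var h =>
    intro n c hc
    have := (List.getElem?_eq_some_iff.1 h).1
    simp only [Tm.shift]
    rw [if_pos (by omega)]
  | lam _ ih =>
    intro n c hc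
    simp only [Tm.shift]
    rw [ih n (c + 1) (by simpa using hc)]
  | const => intros; rfl
  | atomLit _ _ ih => exact ih
  | litGen _ _ ih => exact ih
  | litHead _ _ ih => exact ih
  | genBody _ _ ih => exact ih
  | negLit _ ih => intro n c hc; simp only [Tm.shift, ih n c hc]
  | nafGen _ ih => intro n c hc; simp only [Tm.shift, ih n c hc]
  | ruleH _ ih => intro n c hc; simp only [Tm.shift, ih n c hc]
  | ruleB _ ih => intro n c hc; simp only [Tm.shift, ih n c hc]
  | app _ _ ih1 ih2 => intro n c hc; simp only [Tm.shift, ih1 n c hc, ih2 n c hc]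
  | disj _ _ ih1 ih2 => intro n c hc; simp only [Tm.shift, ih1 n c hc, ih2 n c hc]
  | conj _ _ ih1 ih2 => intro n c hc; simp only [Tm.shift, ih1 n c hc, ih2 n c hc]
  | rule _ _ ih1 ih2 => intro n c hc; simp only [Tm.shift, ih1 n c hc, ih2 n c hc]
  | seq _ _ ih1 ih2 => intro n c hc; simp only [Tm.shift, ih1 n c hc, ih2 n c hc]

theorem lam_typed_order {Γ : List Ty} {t : Tm} {A : Ty} (h : HasType Γ t A) :
    ∀ T b, t = .lam T b → A.order ≠ 0 := by
  induction h with
  | lam _ _ => intro T b _; simp [Ty.order]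
  | atomLit _ _ ih => exact ih
  | litGen _ _ ih => exact ih
  | litHead _ _ ih => exact ih
  | genBody _ _ ih => exact ih
  | _ => intro T b h; cases h

theorem subst_shift (t : Tm) : ∀ k s, Tm.subst k s (t.shift 1 k) = t := by
  induction t with
  | var n =>
    intro k s
    simp only [Tm.shift]
    split_ifs with h
    · simp only [Tm.subst]; rw [if_neg (by omega), if_neg (by omega)]
    · simp only [Tm.subst]; rw [if_neg (by omega), if_pos (by omega)]; rfl
  | _ => intro k s; simp_all [Tm.shift, Tm.subst]

theorem replace_self (t B : Tm) : t.replace t B = B := by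
  cases t <;> simp [Tm.replace]

theorem subst_replace (G : Tm) (hG : ∀ n c, G.shift n c = G) (t : Tm) :
    ∀ k, Tm.subst k G ((t.shift 1 k).replace G (.var k)) = t := by
  have key : ∀ (t : Tm) (k : ℕ), t.shift 1 k = G →
      Tm.subst k G ((t.shift 1 k).replace G (.var k)) = t := by
    intro t k h
    have h2 : t = G := by
      rw [← subst_shift t k G, h]
      conv_lhs => rw [← hG 1 k]
      rw [subst_shift]
    rw [h, replace_self, h2]
    simp [Tm.subst]
  induction t with
  | var n =>
    intro k
    by_cases h : (Tm.var n).shift 1 k = G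
    · exact key _ k h
    · have h2 := subst_shift (.var n) k G
      simp only [Tm.shift] at h h2 ⊢
      split_ifs at h h2 ⊢ with h3 <;> simp only [Tm.replace, if_neg h] <;> exact h2
  | const s T =>
    intro k
    by_cases h : (Tm.const s T).shift 1 k = G
    · exact key _ k h
    · simp only [Tm.shift] at h ⊢
      simp only [Tm.replace, if_neg h, Tm.subst]
  | lam T b ih =>
    intro k
    by_cases h : (Tm.lam T b).shift 1 k = G
    · exact key _ k h
    · simp only [Tm.shift] at h ⊢
      simp only [Tm.replace, if_neg h, Tm.subst, hG]
      have := ih (k + 1)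
      simpa [Tm.shift] using this
  | app a b iha ihb | disj a b iha ihb | conj a b iha ihb | rule a b iha ihb | seq a b iha ihb =>
    intro k
    refine (Classical.em _).elim (key _ k) (fun h => ?_)
    · simp only [Tm.shift] at h ⊢
      simp only [Tm.replace, if_neg h, Tm.subst, iha, ihb]
  | neg a iha | naf a iha | ruleH a iha | ruleB a iha =>
    intro k
    refine (Classical.em _).elim (key _ k) (fun h => ?_)
    · simp only [Tm.shift] at h ⊢
      simp only [Tm.replace, if_neg h, Tm.subst, iha]

theorem occurs_subst (G : Tm) (hG : ∀ n c, G.shift n c = G) (t : Tm) :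
    ∀ k, t.hasFree k = true → Occurs G (Tm.subst k G t) := by
  induction t with
  | var n =>
    intro k h
    simp [Tm.hasFree] at h
    simp only [Tm.subst, if_pos h]
    exact .refl _
  | const s T => intro k h; simp [Tm.hasFree] at h
  | lam T b ih => intro k h; simp only [Tm.subst, hG]; exact .lam (ih _ h)
  | neg a ih => intro k h; exact .neg (ih _ h)
  | naf a ih => intro k h; exact .naf (ih _ h)
  | ruleH a ih => intro k h; exact .ruleH (ih _ h)
  | ruleB a ih => intro k h; exact .ruleB (ih _ h)
  | app a b iha ihb =>
    intro k h
    simp only [Tm.hasFree, Bool.or_eq_true] at h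
    exact h.elim (fun h => .appL (iha _ h)) (fun h => .appR (ihb _ h))
  | disj a b iha ihb =>
    intro k h
    simp only [Tm.hasFree, Bool.or_eq_true] at h
    exact h.elim (fun h => .disjL (iha _ h)) (fun h => .disjR (ihb _ h))
  | conj a b iha ihb =>
    intro k h
    simp only [Tm.hasFree, Bool.or_eq_true] at h
    exact h.elim (fun h => .conjL (iha _ h)) (fun h => .conjR (ihb _ h))
  | rule a b iha ihb =>
    intro k h
    simp only [Tm.hasFree, Bool.or_eq_true] at h
    exact h.elim (fun h => .ruleL (iha _ h)) (fun h => .ruleR (ihb _ h))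
  | seq a b iha ihb =>
    intro k h
    simp only [Tm.hasFree, Bool.or_eq_true] at h
    exact h.elim (fun h => .seqL (iha _ h)) (fun h => .seqR (ihb _ h))

theorem step_of_subst (G : Tm) (hG : ∀ n c, G.shift n c = G) (hGn : G.IsNormal)
    (hGl : ∀ T b, G ≠ .lam T b) (t : Tm) :
    ∀ k u, Step (Tm.subst k G t) u → ∃ v, Step t v := by
  induction t with
  | var n =>
    intro k u h
    simp only [Tm.subst] at h
    split_ifs at h
    · exact absurd h (hGn u)
    · cases h
    · cases h
  | const s T => intro k u h; cases h
  | lam T b ih =>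
    intro k u h
    simp only [Tm.subst, hG] at h
    cases h with
    | lam h => obtain ⟨v, hv⟩ := ih _ _ h; exact ⟨_, .lam hv⟩
  | neg a ih =>
    intro k u h
    cases h with
    | neg h => obtain ⟨v, hv⟩ := ih _ _ h; exact ⟨_, .neg hv⟩
  | naf a ih =>
    intro k u h
    cases h with
    | naf h => obtain ⟨v, hv⟩ := ih _ _ h; exact ⟨_, .naf hv⟩
  | ruleH a ih =>
    intro k u h
    cases h with
    | ruleH h => obtain ⟨v, hv⟩ := ih _ _ h; exact ⟨_, .ruleH hv⟩
  | ruleB a ih =>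
    intro k u h
    cases h with
    | ruleB h => obtain ⟨v, hv⟩ := ih _ _ h; exact ⟨_, .ruleB hv⟩
  | disj a b iha ihb =>
    intro k u h
    cases h with
    | disjL h => obtain ⟨v, hv⟩ := iha _ _ h; exact ⟨_, .disjL hv⟩
    | disjR h => obtain ⟨v, hv⟩ := ihb _ _ h; exact ⟨_, .disjR hv⟩
  | conj a b iha ihb =>
    intro k u h
    cases h with
    | conjL h => obtain ⟨v, hv⟩ := iha _ _ h; exact ⟨_, .conjL hv⟩
    | conjR h => obtain ⟨v, hv⟩ := ihb _ _ h; exact ⟨_, .conjR hv⟩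
  | rule a b iha ihb =>
    intro k u h
    cases h with
    | ruleL h => obtain ⟨v, hv⟩ := iha _ _ h; exact ⟨_, .ruleL hv⟩
    | ruleR h => obtain ⟨v, hv⟩ := ihb _ _ h; exact ⟨_, .ruleR hv⟩
  | seq a b iha ihb =>
    intro k u h
    cases h with
    | seqL h => obtain ⟨v, hv⟩ := iha _ _ h; exact ⟨_, .seqL hv⟩
    | seqR h => obtain ⟨v, hv⟩ := ihb _ _ h; exact ⟨_, .seqR hv⟩
  | app a b iha ihb =>
    intro k u h
    simp only [Tm.subst] at h
    generalize hf : Tm.subst k G a = f at h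
    cases h with
    | appL h => rw [← hf] at h; obtain ⟨v, hv⟩ := iha _ _ h; exact ⟨_, .appL hv⟩
    | appR h => obtain ⟨v, hv⟩ := ihb _ _ h; exact ⟨_, .appR hv⟩
    | beta =>
      cases a with
      | lam T c => exact ⟨_, .beta⟩
      | var n =>
        simp only [Tm.subst] at hf
        split_ifs at hf
        exact absurd hf (hGl _ _)
      | _ => simp [Tm.subst] at hf

theorem steps_normal {M N : Tm} (hM : M.IsNormal) (h : Steps M N) : M = N := by
  rcases Relation.ReflTransGen.cases_head h with h | ⟨u, hu, _⟩
  · exact h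
  · exact absurd hu (hM u)

/-- `G` occurs in the normal form of `F @ G`. -/
theorem occurs_of_normalizes (H G F : Tm) (hG : ∀ n c, G.shift n c = G) (hGn : G.IsNormal)
    (hGl : ∀ T b, G ≠ .lam T b) (hFI : F.lamI = true) (hFn : F.IsNormal)
    (h : Steps (.app F G) H) (hHn : H.IsNormal) : Occurs G H := by
  by_cases hF : ∃ T b, F = .lam T b
  · obtain ⟨T, b, rfl⟩ := hF
    simp only [Tm.lamI, Bool.and_eq_true] at hFI
    have hb : b.IsNormal := fun u hu => hFn _ (.lam hu)
    rcases Relation.ReflTransGen.cases_head h with h | ⟨u, hu, hs⟩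
    · subst h; exact absurd .beta (hHn _)
    · cases hu with
      | beta =>
        have hn : (Tm.subst 0 G b).IsNormal := fun u hu => by
          obtain ⟨v, hv⟩ := step_of_subst G hG hGn hGl b 0 u hu
          exact hb v hv
        rw [← steps_normal hn hs]
        exact occurs_subst G hG b 0 hFI.2
      | appL h => exact absurd h (hFn _)
      | appR h => exact absurd h (hGn _)
  · have hn : (Tm.app F G).IsNormal := by
      intro u hu
      cases hu with
      | beta => exact hF ⟨_, _, rfl⟩
      | appL h => exact hFn _ h
      | appR h => exact hGn _ h
    rw [← steps_normal hn h]
    exact .appR (.refl _)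

/-- **Case `(2,2,0)` of `Inverse_L` completeness.**  For typed ASP λ-calculus formulas
`H` and `G` in β-normal form where `H` has order 2 and `G` has order 0, if there
exists a typed ASP λ-calculus formula `F` of order 2 in β-normal form with
`H = F @ G`, then `Inverse_L(H,G)` returns a non-null formula `F'` with `H = F' @ G`. -/
theorem invL_complete_case_220 (H G : Tm) (A B : Ty)
    (hH : IsFormula H A) (hG : IsFormula G B)
    (hHnf : H.IsNormal) (hGnf : G.IsNormal)
    (hHo : A.order = 2) (hGo : B.order = 0)
    (F : Tm) (C : Ty) (hF : IsFormula F C) (hFo : C.order = 2) (hFnf : F.IsNormal)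
    (heq : NormalizesTo (Tm.app F G) H) :
    ∃ F', InvL H G F' ∧ NormalizesTo (Tm.app F' G) H := by
  have hGs : ∀ n c, G.shift n c = G := fun n c => shift_of_typed hG.typed n c (Nat.zero_le _)
  have hGl : ∀ T b, G ≠ .lam T b := fun T b h => lam_typed_order hG.typed T b h hGo
  have hocc : Occurs G H :=
    occurs_of_normalizes H G F hGs hGnf hGl hF.lamI hFnf heq.1 hHnf
  refine ⟨_, .case2 H G B hocc hG.typed, Relation.ReflTransGen.single ?_, hHnf⟩
  have h := Step.beta (A := B) (b := (H.shift 1 0).replace (G.shift 1 0) (.var 0)) (x := G)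
  have e : Tm.subst 0 G ((H.shift 1 0).replace (G.shift 1 0) (.var 0)) = H := by
    rw [hGs, subst_replace G hGs H 0]
  rwa [e] at h

end ASPLambda
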